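/- The group G_A is called level-transitive if for every n ≥ 0 the action of G_A on the set X^n of words of length n is transitive. There is a computable function that, given (an encoding of) a bounded invertible Mealy automaton A, decides whether the group G_A is level-transitive. -/

import Mathlib

/-- A Mealy automaton over alphabet `X` with state set `S`:
the transition-output function sends `(s, x)` to `(output letter, next state)`. -/
structure Mealy (S X : Type*) where
  step : S → X → X × S

namespace Mealy

variable {S X : Type*}

/-- The section `s|_v`: the state reached after processing the word `v` from state `s`. -/
def sec (A : Mealy S X) (s : S) : List X → S
  | [] => s
  | x :: v => A.sec (A.step s x).2 v

/-- The action of a state on finite words (lists of letters, read left to right). -/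
def act (A : Mealy S X) (s : S) : List X → List X
  | [] => []
  | x :: v => (A.step s x).1 :: A.act (A.step s x).2 v

/-- A state is trivial if it acts on `X^*` as the identity. -/
def IsTrivialState (A : Mealy S X) (s : S) : Prop := ∀ v : List X, A.act s v = v

/-- An automaton is invertible if every state acts on the letters by a permutation. -/
def Invertible (A : Mealy S X) : Prop :=
  ∀ s : S, Function.Bijective fun x : X => (A.step s x).1

/-- The automaton group `G_A`: the subgroup of permutations of `X^*` generated by
the permutations defined by the states of `A`. -/
def autGroup (A : Mealy S X) : Subgroup (Equiv.Perm (List X)) :=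
  Subgroup.closure { f : Equiv.Perm (List X) | ∃ s : S, ∀ v : List X, f v = A.act s v }

/-- A left-infinite sequence `…x₂x₁` is encoded as `p : ℕ → X` with `p 0 = x₁`, `p 1 = x₂`, ….
It is post-critical if it is the sequence of input labels or of output labels of a
left-infinite directed path in `A` ending at a non-trivial state. -/
def IsPostCritical (A : Mealy S X) (p : ℕ → X) : Prop :=
  ∃ (σ : ℕ → S) (inp out : ℕ → X),
    (∀ n, A.step (σ (n + 1)) (inp n) = (out n, σ n)) ∧
      ¬A.IsTrivialState (σ 0) ∧ (p = inp ∨ p = out)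

/-- The post-critical set of `A`. -/
def PostCriticalSet (A : Mealy S X) : Set (ℕ → X) := { p | A.IsPostCritical p }

/-- An automaton is bounded if its post-critical set is finite. -/
def Bounded (A : Mealy S X) : Prop := A.PostCriticalSet.Finite

/-- The length-`n` suffix (as a finite word, read left to right) of a left-infinite
sequence `…x₂x₁` encoded as `p : ℕ → X`: the word `xₙ…x₂x₁`. -/
def lsuffix (p : ℕ → X) (n : ℕ) : List X := (List.range n).reverse.map p

/-- A finite word is post-critical if it is a suffix of some post-critical sequence. -/
def IsPostCriticalWord (A : Mealy S X) (v : List X) : Prop :=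
  ∃ p : ℕ → X, A.IsPostCritical p ∧ v = lsuffix p v.length

/-- The base relation for `e`-equivalence: `v ≈ u` if some state `s` satisfies
`s|_v` trivial and `s(v) = u`, or `s|_u` trivial and `s(u) = v`. -/
def ERel (A : Mealy S X) (v u : List X) : Prop :=
  ∃ s : S, (A.IsTrivialState (A.sec s v) ∧ A.act s v = u) ∨
    (A.IsTrivialState (A.sec s u) ∧ A.act s u = v)

/-- `e`-equivalence: the equivalence relation generated by `≈`. -/
def EEquiv (A : Mealy S X) : List X → List X → Prop := Relation.EqvGen A.ERel

/-- The `e`-orbit of a word. -/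
def eOrbit (A : Mealy S X) (v : List X) : Set (List X) := { u | A.EEquiv v u }

/-- The orbit of a finite word under the automaton group. -/
def orbit (A : Mealy S X) (v : List X) : Set (List X) := { u | ∃ g ∈ A.autGroup, g v = u }

/-- Reachability by a directed path in the automaton. -/
def Reaches (A : Mealy S X) : S → S → Prop :=
  Relation.ReflTransGen fun a b => ∃ x : X, (A.step a x).2 = b

/-- The states of the circuit part `C(A)`: states reachable by a directed path
from some directed cycle of `A`. -/
def circuitStates (A : Mealy S X) : Set S :=
  { s | ∃ t : S, (∃ x : X, A.Reaches (A.step t x).2 t) ∧ A.Reaches t s }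

/-- The circuit part `C(A)` as a subautomaton. -/
def circuitPart (A : Mealy S X) : Mealy A.circuitStates X where
  step s x :=
    ((A.step s.1 x).1,
      ⟨(A.step s.1 x).2, by
        obtain ⟨t, hc, hr⟩ := s.2
        exact ⟨t, hc, hr.tail ⟨x, rfl⟩⟩⟩)

/-- The subautomaton induced on a subset of states closed under transitions. -/
def subautomaton (A : Mealy S X) (T : Set S)
    (hT : ∀ s ∈ T, ∀ x : X, (A.step s x).2 ∈ T) : Mealy T X where
  step s x := ((A.step s.1 x).1, ⟨(A.step s.1 x).2, hT s.1 s.2 x⟩)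

/-- The extension of a length- and prefix-preserving map on finite words to
right-infinite sequences (letter by letter). -/
def extOmega (f : List X → List X) (w : ℕ → X) : ℕ → X :=
  fun n => (f ((List.range (n + 1)).map w)).getD n (w n)

/-- The orbit of a right-infinite sequence under the automaton group. -/
def orbitOmega (A : Mealy S X) (w : ℕ → X) : Set (ℕ → X) :=
  { w' | ∃ g ∈ A.autGroup, w' = extOmega (⇑(g : Equiv.Perm (List X))) w }

/-- The group `G_A` is level-transitive if it acts transitively on each level `X^n`. -/
def LevelTransitive (A : Mealy S X) : Prop :=
  ∀ v u : List X, v.length = u.length → ∃ g ∈ A.autGroup, g v = u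

end Mealy

/-- The run of a deterministic finite-state machine on a right-infinite input:
`dfaRun δ q₀ w n` is the state after reading the first `n` letters. -/
def dfaRun {Q X : Type*} (δ : Q → X → Q) (q₀ : Q) (w : ℕ → X) : ℕ → Q
  | 0 => q₀
  | n + 1 => δ (dfaRun δ q₀ w n) (w n)

/-- A concrete encoding of an invertible Mealy automaton (with state set `Fin n`
over alphabet `Fin k`) as a natural number. -/
def encodeAut (n k : ℕ) (step : Fin n → Fin k → Fin k × Fin n) : ℕ :=
  Nat.pair n (Nat.pair k (Encodable.encode
    ((List.finRange n).flatMap fun s =>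
      (List.finRange k).map fun x =>
        Nat.pair ((step s x).1 : ℕ) ((step s x).2 : ℕ))))


namespace Mealy

section Basics

variable {S X : Type*} (A : Mealy S X)

theorem sec_append (s : S) (v w : List X) : A.sec s (v ++ w) = A.sec (A.sec s v) w := by
  induction v generalizing s with
  | nil => rfl
  | cons x v ih => simp [sec, ih]

theorem act_append (s : S) (v w : List X) :
    A.act s (v ++ w) = A.act s v ++ A.act (A.sec s v) w := by
  induction v generalizing s with
  | nil => rfl
  | cons x v ih => simp [sec, act, ih]

@[simp] theorem act_length (s : S) (v : List X) : (A.act s v).length = v.length := by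
  induction v generalizing s with
  | nil => rfl
  | cons x v ih => simp [act, ih]

theorem sec_snoc (s : S) (v : List X) (x : X) :
    A.sec s (v ++ [x]) = (A.step (A.sec s v) x).2 := by
  rw [sec_append]; rfl

theorem act_snoc (s : S) (v : List X) (x : X) :
    A.act s (v ++ [x]) = A.act s v ++ [(A.step (A.sec s v) x).1] := by
  rw [act_append]; rfl

theorem IsTrivialState.step_fst {A : Mealy S X} {s : S} (h : A.IsTrivialState s) (x : X) :
    (A.step s x).1 = x := by
  have := h [x]
  simpa [act] using this

theorem IsTrivialState.step_snd {A : Mealy S X} {s : S} (h : A.IsTrivialState s) (x : X) :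
    A.IsTrivialState (A.step s x).2 := by
  intro v
  have := h (x :: v)
  simp only [act, List.cons.injEq] at this
  exact this.2

theorem IsTrivialState.sec {A : Mealy S X} {s : S} (h : A.IsTrivialState s) (v : List X) :
    A.IsTrivialState (A.sec s v) := by
  induction v generalizing s with
  | nil => exact h
  | cons x v ih => exact ih (h.step_snd x)

/-- Adjacency in the Schreier graph. -/
def Adj (v u : List X) : Prop := ∃ s : S, A.act s v = u

/-- Adjacency in the tile graph. -/
def Tile (v u : List X) : Prop := ∃ s : S, A.IsTrivialState (A.sec s v) ∧ A.act s v = u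

/-- Same component of the Schreier graph. -/
def Lnk : List X → List X → Prop := Relation.EqvGen A.Adj

/-- Same component of the tile graph. -/
def Sim : List X → List X → Prop := Relation.EqvGen A.Tile

/-- Connectedness of the Schreier graph of level `m`. -/
def Conn (m : ℕ) : Prop := ∀ v u : List X, v.length = m → u.length = m → A.Lnk v u

theorem Sim.lnk {A : Mealy S X} {v u : List X} (h : A.Sim v u) : A.Lnk v u :=
  Relation.EqvGen.mono (r := A.Tile) (p := A.Adj) (fun _ _ ⟨s, _, h⟩ => ⟨s, h⟩) _ _ h

theorem Lnk.length {A : Mealy S X} {v u : List X} (h : A.Lnk v u) : v.length = u.length := by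
  induction h with
  | rel a b h => obtain ⟨s, rfl⟩ := h; simp
  | refl a => rfl
  | symm a b _ ih => exact ih.symm
  | trans a b c _ _ h1 h2 => exact h1.trans h2

theorem Sim.length {A : Mealy S X} {v u : List X} (h : A.Sim v u) : v.length = u.length :=
  h.lnk.length

theorem Sim.refl {A : Mealy S X} (v : List X) : A.Sim v v := Relation.EqvGen.refl v

theorem Sim.symm {A : Mealy S X} {v u : List X} (h : A.Sim v u) : A.Sim u v :=
  Relation.EqvGen.symm _ _ h

theorem Sim.trans {A : Mealy S X} {v u w : List X} (h : A.Sim v u) (h' : A.Sim u w) :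
    A.Sim v w := Relation.EqvGen.trans _ _ _ h h'

theorem Sim.snoc {A : Mealy S X} {v u : List X} (h : A.Sim v u) (x : X) :
    A.Sim (v ++ [x]) (u ++ [x]) := by
  induction h with
  | rel a b h =>
    obtain ⟨s, ht, rfl⟩ := h
    refine Relation.EqvGen.rel _ _ ⟨s, ?_, ?_⟩
    · rw [sec_snoc]; exact ht.step_snd x
    · rw [act_snoc, ht.step_fst]
  | refl a => exact Sim.refl _
  | symm a b _ ih => exact ih.symm
  | trans a b c _ _ h1 h2 => exact h1.trans h2

/-- One-directional simulation between the boundary data of levels `i` and `j`. -/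
structure Half (R : List X → List X → Prop) (i j : ℕ) : Prop where
  len : ∀ w w', R w w' → w.length = i ∧ w'.length = j
  tot : ∀ w : List X, w.length = i → ∃ w', R w w'
  sim : ∀ w w' v v', R w w' → R v v' → A.Sim w v → A.Sim w' v'
  bd : ∀ s w, w.length = i → ¬ A.IsTrivialState (A.sec s w) →
    ∃ s' w', A.sec s' w' = A.sec s w ∧ R w w' ∧ R (A.act s w) (A.act s' w')

/-- The induced relation on the next level. -/
def Nxt (R : List X → List X → Prop) (a a' : List X) : Prop :=
  ∃ w w' x, R w w' ∧ a = w ++ [x] ∧ a' = w' ++ [x]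

theorem exists_snoc {m : ℕ} (w : List X) (h : w.length = m + 1) :
    ∃ v x, w = v ++ [x] ∧ v.length = m := by
  have hne : w ≠ [] := by rintro rfl; simp at h
  refine ⟨w.dropLast, w.getLast hne, (List.dropLast_append_getLast hne).symm, ?_⟩
  simp [h]

theorem Half.nxt_sim {A : Mealy S X} {R : List X → List X → Prop} {i j : ℕ} (h : A.Half R i j)
    (a b : List X) (hab : A.Sim a b) (hl : a.length = i + 1) :
    ∀ a' b', Nxt R a a' → Nxt R b b' → A.Sim a' b' := by
  induction hab with
  | rel a b hab =>
    rintro _ _ ⟨w, w', x, hR, rfl, rfl⟩ ⟨v, v', y, hR', rfl, rfl⟩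
    obtain ⟨s, ht, he⟩ := hab
    rw [act_snoc] at he
    obtain ⟨he1, he2⟩ := List.append_inj' he rfl
    simp only [List.cons.injEq, and_true] at he2
    rw [sec_snoc] at ht
    by_cases htr : A.IsTrivialState (A.sec s w)
    · rw [htr.step_fst] at he2
      subst he2
      exact (h.sim _ _ _ _ hR hR' (Relation.EqvGen.rel _ _ ⟨s, htr, he1⟩)).snoc x
    · obtain ⟨s', w1, e1, hw1, hu1⟩ := h.bd s w (h.len _ _ hR).1 htr
      have h1 := (h.sim _ _ _ _ hR hw1 (Sim.refl _)).snoc x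
      rw [he1] at hu1
      have h2 := (h.sim _ _ _ _ hu1 hR' (Sim.refl _)).snoc y
      refine h1.trans (Sim.trans (Relation.EqvGen.rel _ _ ⟨s', ?_, ?_⟩) h2)
      · rw [sec_snoc, e1]; exact ht
      · rw [act_snoc, e1, he2]
  | refl a =>
    rintro _ _ ⟨w, w', x, hR, rfl, rfl⟩ ⟨v, v', y, hR', he, rfl⟩
    obtain ⟨rfl, he2⟩ := List.append_inj' he rfl
    simp only [List.cons.injEq, and_true] at he2
    subst he2
    exact (h.sim _ _ _ _ hR hR' (Sim.refl _)).snoc x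
  | symm a b hab ih =>
    intro a' b' ha hb
    exact (ih ((Sim.length hab).trans hl) b' a' hb ha).symm
  | trans a b c hab hbc ih1 ih2 =>
    intro a' c' ha hc
    have hbl := (Sim.length hab).symm.trans hl
    obtain ⟨v, x, rfl, hv⟩ := exists_snoc b hbl
    obtain ⟨v', hv'⟩ := h.tot v hv
    exact (ih1 hl _ _ ha ⟨v, v', x, hv', rfl, rfl⟩).trans
      (ih2 hbl _ _ ⟨v, v', x, hv', rfl, rfl⟩ hc)

theorem Half.nxt {A : Mealy S X} {R : List X → List X → Prop} {i j : ℕ} (h : A.Half R i j) :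
    A.Half (Nxt R) (i + 1) (j + 1) where
  len := by
    rintro _ _ ⟨w, w', x, hR, rfl, rfl⟩
    have := h.len _ _ hR
    simp [this.1, this.2]
  tot := by
    intro w hw
    obtain ⟨v, x, rfl, hv⟩ := exists_snoc w hw
    obtain ⟨v', hv'⟩ := h.tot v hv
    exact ⟨_, v, v', x, hv', rfl, rfl⟩
  sim := by
    intro w w' v v' hw hv hs
    refine h.nxt_sim w v hs ?_ _ _ hw hv
    obtain ⟨w, w', x, hR, rfl, rfl⟩ := hw
    simp [(h.len _ _ hR).1]
  bd := by
    intro s w hw ht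
    obtain ⟨v, x, rfl, hv⟩ := exists_snoc w hw
    have ht' : ¬ A.IsTrivialState (A.sec s v) := by
      intro hh; apply ht; rw [sec_snoc]; exact hh.step_snd x
    obtain ⟨s', w1, e1, hw1, hu1⟩ := h.bd s v hv ht'
    refine ⟨s', w1 ++ [x], ?_, ⟨v, w1, x, hw1, rfl, rfl⟩, ?_⟩
    · rw [sec_snoc, sec_snoc, e1]
    · rw [act_snoc, act_snoc, e1]
      exact ⟨_, _, _, hu1, rfl, rfl⟩

theorem Half.lnk {A : Mealy S X} {R : List X → List X → Prop} {i j : ℕ} (h : A.Half R i j)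
    (a b : List X) (hab : A.Lnk a b) (hl : a.length = i) :
    ∀ a' b', R a a' → R b b' → A.Lnk a' b' := by
  induction hab with
  | rel a b hab =>
    intro a' b' ha hb
    obtain ⟨s, he⟩ := hab
    by_cases htr : A.IsTrivialState (A.sec s a)
    · exact (h.sim _ _ _ _ ha hb (Relation.EqvGen.rel _ _ ⟨s, htr, he⟩)).lnk
    · obtain ⟨s', w1, e1, hw1, hu1⟩ := h.bd s a hl htr
      rw [he] at hu1
      have h1 := (h.sim _ _ _ _ ha hw1 (Sim.refl _)).lnk
      have h2 := (h.sim _ _ _ _ hu1 hb (Sim.refl _)).lnk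
      exact Relation.EqvGen.trans _ _ _ h1
        (Relation.EqvGen.trans _ _ _ (Relation.EqvGen.rel _ _ ⟨s', rfl⟩) h2)
  | refl a =>
    intro a' b' ha hb
    exact (h.sim _ _ _ _ ha hb (Sim.refl _)).lnk
  | symm a b hab ih =>
    intro a' b' ha hb
    exact Relation.EqvGen.symm _ _ (ih ((Lnk.length hab).trans hl) b' a' hb ha)
  | trans a b c hab hbc ih1 ih2 =>
    intro a' c' ha hc
    have hbl := (Lnk.length hab).symm.trans hl
    obtain ⟨v', hv'⟩ := h.tot b hbl
    exact Relation.EqvGen.trans _ _ _ (ih1 hl _ _ ha hv') (ih2 hbl _ _ hv' hc)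

/-- Two levels carry isomorphic boundary data. -/
def Bis (i j : ℕ) : Prop :=
  ∃ R : List X → List X → Prop, A.Half R i j ∧ A.Half (flip R) j i

theorem Bis.add {A : Mealy S X} {i j : ℕ} (h : A.Bis i j) (d : ℕ) : A.Bis (i + d) (j + d) := by
  induction d with
  | zero => exact h
  | succ d ih =>
    obtain ⟨R, h1, h2⟩ := ih
    refine ⟨Nxt R, h1.nxt, ?_⟩
    have : flip (Nxt R) = Nxt (flip R) := by
      funext a b
      apply propext
      constructor
      · rintro ⟨w, w', x, h, h', h''⟩; exact ⟨w', w, x, h, h'', h'⟩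
      · rintro ⟨w, w', x, h, h', h''⟩; exact ⟨w', w, x, h, h'', h'⟩
    rw [this]
    exact h2.nxt

theorem Bis.conn {A : Mealy S X} {i j : ℕ} (h : A.Bis i j) (hc : A.Conn i) : A.Conn j := by
  obtain ⟨R, h1, h2⟩ := h
  intro v u hv hu
  obtain ⟨v', hv'⟩ := h2.tot v hv
  obtain ⟨u', hu'⟩ := h2.tot u hu
  have lv := (h1.len _ _ hv').1
  exact h1.lnk v' u' (hc _ _ lv (h1.len _ _ hu').1) lv _ _ hv' hu'

theorem conn_of_bis {i j B : ℕ} (hij : i < j) (hj : j ≤ B) (h : A.Bis i j)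
    (hB : ∀ m ≤ B, A.Conn m) : ∀ m, A.Conn m := by
  intro m
  induction m using Nat.strong_induction_on with
  | _ m ih =>
    by_cases hm : m ≤ B
    · exact hB m hm
    · have := (h.add (m - j)).conn (ih _ (by omega))
      rwa [show j + (m - j) = m by omega] at this

end Basics

section Codes

variable {S X L : Type*} (A : Mealy S X)

/-- Being an endpoint (with index) of a boundary edge, or the base word. -/
def Pt (x0 : X) (enc : S → List X → L) (m : ℕ) : Option (L × Bool) → List X → Prop
  | none, w => w = List.replicate m x0
  | some (l, b), w => ∃ s v, v.length = m ∧ ¬ A.IsTrivialState (A.sec s v) ∧ enc s v = l ∧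
      w = if b then A.act s v else v

/-- Injectivity of a labelling on boundary edges. -/
def EncInj (enc : S → List X → L) (m : ℕ) : Prop :=
  ∀ s v s' v', v.length = m → v'.length = m → ¬ A.IsTrivialState (A.sec s v) →
    ¬ A.IsTrivialState (A.sec s' v') → enc s v = enc s' v' → s = s' ∧ v = v'

/-- The finite code of a level. -/
def code (x0 : X) (enc : S → List X → L) (m : ℕ) :
    (Option (L × Bool) → Option (L × Bool) → Prop) × (L → S → Prop) :=
  (fun p q => ∃ w v, A.Pt x0 enc m p w ∧ A.Pt x0 enc m q v ∧ A.Sim w v,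
   fun l t => ∃ s v, v.length = m ∧ ¬ A.IsTrivialState (A.sec s v) ∧ enc s v = l ∧
      A.sec s v = t)

variable {A}

theorem Pt.length {x0 : X} {enc : S → List X → L} {m : ℕ} {p : Option (L × Bool)} {w : List X}
    (h : A.Pt x0 enc m p w) : w.length = m := by
  rcases p with _ | ⟨l, b⟩
  · rw [show w = _ from h]; simp
  · obtain ⟨s, v, h1, h2, h3, rfl⟩ := h
    cases b <;> simp [h1]

theorem Pt.unique {x0 : X} {enc : S → List X → L} {m : ℕ} (he : A.EncInj enc m)
    {p : Option (L × Bool)} {w w' : List X}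
    (h : A.Pt x0 enc m p w) (h' : A.Pt x0 enc m p w') : w = w' := by
  rcases p with _ | ⟨l, b⟩
  · exact (show w = _ from h).trans (show w' = _ from h').symm
  · obtain ⟨s, v, h1, h2, h3, rfl⟩ := h
    obtain ⟨s', v', h1', h2', h3', rfl⟩ := h'
    obtain ⟨rfl, rfl⟩ := he s v s' v' h1 h1' h2 h2' (h3.trans h3'.symm)
    rfl

theorem lnk_pt {x0 : X} {enc : S → List X → L} {m : ℕ} {a b : List X} (h : A.Lnk a b)
    (hl : a.length = m) :
    A.Sim a b ∨ ((∃ p v, A.Pt x0 enc m p v ∧ A.Sim a v) ∧ (∃ p v, A.Pt x0 enc m p v ∧ A.Sim b v)) := by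
  induction h with
  | rel a b hab =>
    obtain ⟨s, rfl⟩ := hab
    by_cases htr : A.IsTrivialState (A.sec s a)
    · exact Or.inl (Relation.EqvGen.rel _ _ ⟨s, htr, rfl⟩)
    · right
      exact ⟨⟨some (enc s a, false), a, ⟨s, a, hl, htr, rfl, by simp⟩, Sim.refl _⟩,
        ⟨some (enc s a, true), _, ⟨s, a, hl, htr, rfl, by simp⟩, Sim.refl _⟩⟩
  | refl a => exact Or.inl (Sim.refl _)
  | symm a b hab ih =>
    rcases ih ((Lnk.length hab).trans hl) with h | ⟨h1, h2⟩
    · exact Or.inl h.symm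
    · exact Or.inr ⟨h2, h1⟩
  | trans a b c hab hbc ih1 ih2 =>
    rcases ih1 hl with h | ⟨h1, h2⟩
    · rcases ih2 ((Lnk.length hab).symm.trans hl) with h' | ⟨⟨p, v, hp, hv⟩, h2'⟩
      · exact Or.inl (h.trans h')
      · exact Or.inr ⟨⟨p, v, hp, h.trans hv⟩, h2'⟩
    · rcases ih2 ((Lnk.length hab).symm.trans hl) with h' | ⟨h1', h2'⟩
      · obtain ⟨p, v, hp, hv⟩ := h2
        exact Or.inr ⟨h1, ⟨p, v, hp, h'.symm.trans hv⟩⟩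
      · exact Or.inr ⟨h1, h2'⟩

theorem half_of_code {x0 : X} {enc enc' : S → List X → L} {i j : ℕ} 
    (he : A.EncInj enc i) (he' : A.EncInj enc' j) (hi : A.Conn i)
    (hc : A.code x0 enc i = A.code x0 enc' j) :
    A.Half (fun w w' => ∃ p v v', A.Pt x0 enc i p v ∧ A.Pt x0 enc' j p v' ∧
      A.Sim w v ∧ A.Sim w' v') i j := by
  have hc1 : ∀ p q, (A.code x0 enc i).1 p q → (A.code x0 enc' j).1 p q := by
    intro p q h; rw [← hc]; exact h
  have hc2 : ∀ p q, (A.code x0 enc i).2 p q → (A.code x0 enc' j).2 p q := by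
    intro p q h; rw [← hc]; exact h
  refine ⟨?_, ?_, ?_, ?_⟩
  · rintro w w' ⟨p, v, v', h1, h2, h3, h4⟩
    exact ⟨h3.length.trans h1.length, h4.length.trans h2.length⟩
  · intro w hw
    have : ∃ p v, A.Pt x0 enc i p v ∧ A.Sim w v := by
      rcases lnk_pt (x0 := x0) (enc := enc) (hi w (List.replicate i x0) hw (by simp)) hw with h | h
      · exact ⟨none, _, rfl, h⟩
      · exact h.1
    obtain ⟨p, v, hp, hv⟩ := this
    obtain ⟨a, b, ha, -, -⟩ := hc1 p p ⟨v, v, hp, hp, Sim.refl _⟩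
    exact ⟨a, p, v, a, hp, ha, hv, Sim.refl _⟩
  · rintro w w' u u' ⟨p, v, v', h1, h2, h3, h4⟩ ⟨q, z, z', g1, g2, g3, g4⟩ hs
    obtain ⟨a, b, ha, hb, hab⟩ := hc1 p q ⟨v, z, h1, g1, h3.symm.trans (hs.trans g3)⟩
    obtain rfl := ha.unique he' h2
    obtain rfl := hb.unique he' g2
    exact h4.trans (hab.trans g4.symm)
  · intro s w hw ht
    obtain ⟨s', v', h1, h2, h3, h4⟩ := hc2 (enc s w) (A.sec s w) ⟨s, w, hw, ht, rfl, rfl⟩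
    refine ⟨s', v', h4, ?_, ?_⟩
    · exact ⟨some (enc s w, false), w, v', ⟨s, w, hw, ht, rfl, by simp⟩,
        ⟨s', v', h1, h2, h3, by simp⟩, Sim.refl _, Sim.refl _⟩
    · exact ⟨some (enc s w, true), _, _, ⟨s, w, hw, ht, rfl, by simp⟩,
        ⟨s', v', h1, h2, h3, by simp⟩, Sim.refl _, Sim.refl _⟩

theorem bis_of_code {x0 : X} {enc enc' : S → List X → L} {i j : ℕ} 
    (he : A.EncInj enc i) (he' : A.EncInj enc' j) (hi : A.Conn i) (hj : A.Conn j)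
    (hc : A.code x0 enc i = A.code x0 enc' j) : A.Bis i j := by
  refine ⟨_, half_of_code he he' hi hc, ?_⟩
  have := half_of_code he' he hj hc.symm
  convert this using 1
  funext w w'
  apply propext
  constructor
  · rintro ⟨p, v, v', h1, h2, h3, h4⟩; exact ⟨p, v', v, h2, h1, h4, h3⟩
  · rintro ⟨p, v, v', h1, h2, h3, h4⟩; exact ⟨p, v', v, h2, h1, h4, h3⟩

theorem conn_of_bound [Fintype S] [Fintype L] (x0 : X) (B : ℕ)
    (hcard : Fintype.card L = B)
    (enc : ℕ → S → List X → L) (he : ∀ m, A.EncInj (enc m) m)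
    (hB : ∀ m ≤ (2 ^ (2 * B + 1)) ^ (2 * B + 1) * (2 ^ Fintype.card S) ^ B, A.Conn m) :
    ∀ m, A.Conn m := by
  classical
  set N := (2 ^ (2 * B + 1)) ^ (2 * B + 1) * (2 ^ Fintype.card S) ^ B with hN
  have hlt : Fintype.card ((Option (L × Bool) → Option (L × Bool) → Prop) × (L → S → Prop)) <
      Fintype.card (Fin (N + 1)) := by
    simp only [Fintype.card_prod, Fintype.card_fun, Fintype.card_option, Fintype.card_bool,
      Fintype.card_prop, Fintype.card_fin, hcard, hN]
    rw [mul_comm B 2]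
    omega
  obtain ⟨i, j, hij, hc⟩ := Fintype.exists_ne_map_eq_of_card_lt
    (fun m : Fin (N + 1) => A.code x0 (enc m) m) hlt
  have key : ∀ i j : Fin (N + 1), i < j → A.code x0 (enc i) i = A.code x0 (enc j) j →
      ∀ m, A.Conn m := by
    intro i j hij hc
    have hj : (j : ℕ) ≤ N := Nat.lt_succ_iff.mp j.2
    have hi : (i : ℕ) ≤ N := Nat.lt_succ_iff.mp i.2
    exact A.conn_of_bis hij hj (bis_of_code (he i) (he j) (hB _ hi) (hB _ hj) hc) hB
  rcases lt_or_gt_of_ne hij with h | h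
  · exact key i j h hc
  · exact key j i h hc.symm

end Codes

end Mealy

namespace Mealy

section Bdd

variable {S X : Type*} (A : Mealy S X)

/-- Appending a finite word on the right of a left-infinite sequence. -/
def app (p : ℕ → X) : List X → (ℕ → X)
  | [] => p
  | x :: y => app (fun n => Nat.casesOn n x p) y

theorem app_append (p : ℕ → X) (y z : List X) : app p (y ++ z) = app (app p y) z := by
  induction y generalizing p with
  | nil => rfl
  | cons x y ih => exact ih _

theorem app_add (p : ℕ → X) (y : List X) (m : ℕ) : app p y (m + y.length) = p m := by
  induction y generalizing p m with
  | nil => rfl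
  | cons x y ih =>
    have := ih (fun n => Nat.casesOn n x p) (m + 1)
    simp only [app, List.length_cons]
    rw [show m + (y.length + 1) = m + 1 + y.length by omega, this]

theorem app_inj {p q : ℕ → X} {y : List X} (h : app p y = app q y) : p = q := by
  funext m
  rw [← app_add p y, h, app_add]

theorem app_get (p : ℕ → X) (y : List X) (j : ℕ) (hj : j < y.length) :
    app p y (y.length - 1 - j) = y[j] := by
  induction y generalizing p j with
  | nil => simp at hj
  | cons x y ih =>
    rcases j with _ | j
    · have := app_add (fun n => Nat.casesOn n x p) y 0
      simpa [app] using this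
    · have := ih (fun n => Nat.casesOn n x p) j (by simpa using hj)
      simp only [app, List.length_cons, List.getElem_cons_succ]
      rw [← this]
      congr 1
      omega

/-- A left-infinite path ending at `t` with input labels `p`. -/
def LPath (p : ℕ → X) (t : S) : Prop :=
  ∃ σ : ℕ → S, σ 0 = t ∧ ∀ n, (A.step (σ (n + 1)) (p n)).2 = σ n

variable {A}

theorem LPath.pc {p : ℕ → X} {t : S} (h : A.LPath p t) (ht : ¬ A.IsTrivialState t) :
    p ∈ A.PostCriticalSet := by
  obtain ⟨σ, rfl, h⟩ := h
  refine ⟨σ, p, fun n => (A.step (σ (n + 1)) (p n)).1, fun n => ?_, ht, Or.inl rfl⟩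
  rw [← h n]

theorem LPath.app {p : ℕ → X} {t : S} (h : A.LPath p t) (y : List X) :
    A.LPath (app p y) (A.sec t y) := by
  induction y generalizing p t with
  | nil => exact h
  | cons x y ih =>
    refine ih ?_
    obtain ⟨σ, rfl, h⟩ := h
    refine ⟨fun n => Nat.casesOn n (A.step (σ 0) x).2 σ, rfl, ?_⟩
    rintro (_ | n)
    · rfl
    · exact h n

/-- The left-infinite sequence `…uuu`. -/
def per (u : List X) (hu : u ≠ []) (m : ℕ) : X :=
  u[u.length - 1 - m % u.length]'(by
    have := List.length_pos_iff.mpr hu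
    omega)

theorem sec_take_succ (s : S) (w : List X) (i : ℕ) (h : i < w.length) :
    A.sec s (w.take (i + 1)) = (A.step (A.sec s (w.take i)) w[i]).2 := by
  rw [List.take_succ_eq_append_getElem h, sec_snoc]

theorem per_lpath {t : S} {u : List X} (hu : u ≠ []) (h : A.sec t u = t) :
    A.LPath (per u hu) t := by
  have hc := List.length_pos_iff.mpr hu
  refine ⟨fun m => A.sec t (u.take (u.length - m % u.length)), by simp [h], ?_⟩
  intro m
  simp only [per]
  have hr := Nat.mod_lt m hc
  have key := sec_take_succ (A := A) t u (u.length - 1 - m % u.length) (by omega)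
  rw [show u.length - 1 - m % u.length + 1 = u.length - m % u.length by omega] at key
  rw [key]
  by_cases hm : m % u.length = u.length - 1
  · have h0 : (m + 1) % u.length = 0 := by
      rw [Nat.add_mod, hm]
      rcases Nat.lt_or_ge 1 u.length with h1 | h1
      · rw [Nat.mod_eq_of_lt h1, Nat.sub_add_cancel hc, Nat.mod_self]
      · have : u.length = 1 := by omega
        simp [this]
    rw [h0]
    have e : u.length - 1 - m % u.length = 0 := by omega
    simp only [e]
    simp [h, sec]
  · have h0 : (m + 1) % u.length = m % u.length + 1 := by
      rw [Nat.add_mod, Nat.mod_eq_of_lt (a := 1) (by omega), Nat.mod_eq_of_lt (by omega)]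
    rw [h0, show u.length - (m % u.length + 1) = u.length - 1 - m % u.length by omega]

theorem sec_iter {t : S} {z : List X} (h : A.sec t z = t) (i : ℕ) :
    A.sec t (List.replicate i z).flatten = t := by
  induction i with
  | zero => rfl
  | succ i ih => rw [List.replicate_succ, List.flatten_cons, sec_append, h, ih]

theorem period_mul {p : ℕ → X} {D : ℕ} (h : ∀ m, p (m + D) = p m) (N m : ℕ) :
    p (m + D * N) = p m := by
  induction N with
  | zero => rfl
  | succ N ih => rw [Nat.mul_succ, ← Nat.add_assoc, h, ih]

/-- Key consequence of boundedness: from a cyclic state, a path to another nontrivial cyclic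
state must follow the cycle. -/
theorem Bounded.follow (hA : A.Bounded) {t : S} {u v z : List X} (hu : u ≠ [])
    (htu : A.sec t u = t) (hz : z ≠ []) (hvz : A.sec (A.sec t v) z = A.sec t v)
    (hn : ¬ A.IsTrivialState (A.sec t v)) (j : ℕ) (hj : j < v.length) :
    v[j]? = u[j % u.length]? := by
  have hc := List.length_pos_iff.mpr hu
  set base := per u hu with hbase
  set b := app base v with hb
  have hmem : ∀ i : ℕ, app b (List.replicate i z).flatten ∈ A.PostCriticalSet := by
    intro i
    have h1 := ((per_lpath hu htu).app v).app (List.replicate i z).flatten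
    rw [sec_iter hvz] at h1
    exact h1.pc hn
  have hnin : ¬ Function.Injective (fun i : ℕ => app b (List.replicate i z).flatten) := by
    intro hinj
    refine Set.infinite_range_of_injective hinj (hA.subset ?_)
    rintro _ ⟨i, rfl⟩
    exact hmem i
  have hper : ∃ e : List X, e ≠ [] ∧ b = app b e := by
    have key : ∀ i j : ℕ, i < j → app b (List.replicate i z).flatten =
        app b (List.replicate j z).flatten → ∃ e : List X, e ≠ [] ∧ b = app b e := by
      intro i j hij h
      refine ⟨(List.replicate (j - i) z).flatten, ?_, ?_⟩
      · obtain ⟨d, hd⟩ : ∃ d, j - i = d + 1 := ⟨j - i - 1, by omega⟩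
        rw [hd, List.replicate_succ, List.flatten_cons]
        simp [hz]
      · have e : (List.replicate j z).flatten =
            (List.replicate (j - i) z).flatten ++ (List.replicate i z).flatten := by
          rw [← List.flatten_append, List.replicate_append_replicate, Nat.sub_add_cancel hij.le]
        rw [e, app_append] at h
        exact app_inj h
    simp only [Function.Injective, not_forall] at hnin
    obtain ⟨i, j, h, hij⟩ := hnin
    rcases lt_or_gt_of_ne hij with h' | h'
    · exact key i j h' h
    · exact key j i h' h.symm
  obtain ⟨e, he, hbe⟩ := hper
  have hD := List.length_pos_iff.mpr he
  have hp : ∀ m, b (m + e.length) = b m := by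
    intro m
    conv_lhs => rw [hbe]
    exact app_add b e m
  have h1 : v[j] = b (v.length - 1 - j) := (app_get base v j hj).symm
  set K := e.length * v.length with hK
  have hKv : v.length ≤ K := Nat.le_mul_of_pos_left _ hD
  have hKc : K ≤ u.length * K := Nat.le_mul_of_pos_left _ hc
  have h2 : b (v.length - 1 - j) = b (v.length - 1 - j + e.length * (v.length * u.length)) :=
    (period_mul hp _ _).symm
  have h3 : v.length - 1 - j + e.length * (v.length * u.length)
      = (u.length * K - 1 - j) + v.length := by
    rw [← Nat.mul_assoc, ← hK, Nat.mul_comm K]; omega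
  have h4 : b (u.length * K - 1 - j + v.length) = base (u.length * K - 1 - j) := app_add _ _ _
  rw [h3, h4] at h2
  rw [List.getElem?_eq_getElem hj, h1, h2, hbase, per,
    List.getElem?_eq_getElem (Nat.mod_lt _ hc)]
  congr 2
  have hr := Nat.mod_lt j hc
  have hdiv := Nat.div_add_mod j u.length
  have hq : j / u.length < K := lt_of_le_of_lt (Nat.div_le_self _ _) (by omega)
  have e1 : u.length * K - 1 - j =
      (u.length - 1 - j % u.length) + u.length * (K - 1 - j / u.length) := by
    obtain ⟨d, hd⟩ : ∃ d, K = d + 1 + j / u.length := ⟨K - 1 - j / u.length, by omega⟩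
    rw [show K - 1 - j / u.length = d by omega, hd, Nat.mul_add, Nat.mul_add]
    omega
  rw [e1, Nat.add_mul_mod_self_left, Nat.mod_eq_of_lt (by omega)]
  omega

theorem exists_repeat [Fintype S] (q : S) (w : List X) :
    ∃ i j, i < j ∧ j ≤ Fintype.card S ∧ A.sec q (w.take i) = A.sec q (w.take j) := by
  obtain ⟨i, j, hij, h⟩ := Fintype.exists_ne_map_eq_of_card_lt
    (fun m : Fin (Fintype.card S + 1) => A.sec q (w.take m)) (by simp)
  rcases lt_or_gt_of_ne hij with h' | h'
  · exact ⟨i, j, h', by omega, h⟩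
  · exact ⟨j, i, h', by omega, h.symm⟩

theorem sec_take_drop (q : S) (w : List X) {i j : ℕ} (hij : i ≤ j) :
    A.sec (A.sec q (w.take i)) ((w.take j).drop i) = A.sec q (w.take j) := by
  rw [← sec_append]
  congr 1
  conv_rhs => rw [← List.take_append_drop i (w.take j), List.take_take, min_eq_left hij]

open Classical in
/-- A chosen infinite cycle word at a state. -/
noncomputable def cyc (A : Mealy S X) (t : S) (j : ℕ) : Option X :=
  if h : ∃ u : List X, u ≠ [] ∧ A.sec t u = t then h.choose[j % h.choose.length]? else none

theorem Bounded.shape [Fintype S] (hA : A.Bounded) (q : S) (w : List X)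
    (hw : ¬ A.IsTrivialState (A.sec q w)) :
    ∃ i, i < Fintype.card S + 1 ∧ ∀ idx, Fintype.card S ≤ idx → idx + Fintype.card S < w.length →
      i ≤ idx ∧ w[idx]? = A.cyc (A.sec q (w.take i)) (idx - i) := by
  obtain ⟨i, j, hij, hj, he⟩ := exists_repeat (A := A) q w
  refine ⟨i, by omega, fun idx h1 h2 => ⟨by omega, ?_⟩⟩
  set n := Fintype.card S with hn
  have hex : ∃ u : List X, u ≠ [] ∧ A.sec (A.sec q (w.take i)) u = A.sec q (w.take i) := by
    refine ⟨(w.take j).drop i, ?_, ?_⟩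
    · apply List.ne_nil_of_length_pos
      simp; omega
    · rw [sec_take_drop q w hij.le, he]
  rw [cyc, dif_pos hex]
  obtain ⟨hu1, hu2⟩ := hex.choose_spec
  set u := hex.choose
  obtain ⟨a, b, hab, hb, hrep⟩ := exists_repeat (A := A) (A.sec q (w.take (w.length - n)))
    (w.drop (w.length - n))
  have tk : ∀ a, A.sec (A.sec q (w.take (w.length - n))) ((w.drop (w.length - n)).take a) =
      A.sec q (w.take (w.length - n + a)) := by
    intro a
    rw [← sec_append, List.take_add]
  rw [tk, tk] at hrep
  have hvs : A.sec (A.sec q (w.take i)) ((w.take (w.length - n + a)).drop i) =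
      A.sec q (w.take (w.length - n + a)) := sec_take_drop q w (by omega)
  have := hA.follow (t := A.sec q (w.take i)) (v := (w.take (w.length - n + a)).drop i)
    (z := (w.take (w.length - n + b)).drop (w.length - n + a)) hu1 hu2
    (by apply List.ne_nil_of_length_pos; simp; omega)
    (by rw [hvs, sec_take_drop q w (by omega), hrep])
    (by
      rw [hvs]
      intro ht
      apply hw
      have := ht.sec (w.drop (w.length - n + a))
      rwa [← sec_append, List.take_append_drop] at this)
    (idx - i) (by simp; omega)
  rw [← this, List.getElem?_drop, List.getElem?_take, if_pos (by omega)]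
  congr 1
  omega

theorem Bounded.exists_enc [Fintype S] (hA : A.Bounded) (m : ℕ) :
    ∃ enc : S → List X → S × Fin (Fintype.card S + 1) × (Fin (Fintype.card S) → Option X) ×
      (Fin (Fintype.card S) → Option X), A.EncInj enc m := by
  classical
  have H : ∀ (q : S) (w : List X), ∃ i : Fin (Fintype.card S + 1),
      ¬ A.IsTrivialState (A.sec q w) → ∀ idx, Fintype.card S ≤ idx →
      idx + Fintype.card S < w.length →
      i ≤ idx ∧ w[idx]? = A.cyc (A.sec q (w.take i)) (idx - i) := by
    intro q w
    by_cases h : A.IsTrivialState (A.sec q w)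
    · exact ⟨0, fun h' => absurd h h'⟩
    · obtain ⟨i, hi, h'⟩ := hA.shape q w h
      exact ⟨⟨i, hi⟩, fun _ => h'⟩
  choose I hI using H
  refine ⟨fun s w => (s, I s w, fun a => w[(a : ℕ)]?, fun a => w.reverse[(a : ℕ)]?), ?_⟩
  intro s v s' v' hv hv' ht ht' he
  simp only [Prod.mk.injEq] at he
  obtain ⟨rfl, hi, h1, h2⟩ := he
  refine ⟨rfl, List.ext_getElem? fun idx => ?_⟩
  have h1' : ∀ a < Fintype.card S, v[a]? = v'[a]? := fun a ha => congrFun h1 ⟨a, ha⟩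
  have h2' : ∀ a < Fintype.card S, v.reverse[a]? = v'.reverse[a]? :=
    fun a ha => congrFun h2 ⟨a, ha⟩
  by_cases c1 : idx < Fintype.card S
  · exact h1' idx c1
  by_cases c2 : m ≤ idx
  · rw [List.getElem?_eq_none (by omega), List.getElem?_eq_none (by omega)]
  by_cases c3 : idx + Fintype.card S < m
  · have a1 := hI s v ht idx (by omega) (by omega)
    have a2 := hI s v' ht' idx (by omega) (by omega)
    rw [a1.2, a2.2, ← hi]
    have : v.take (I s v) = v'.take (I s v) := by
      apply List.ext_getElem?
      intro l
      rw [List.getElem?_take, List.getElem?_take]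
      split_ifs with hl
      · exact h1' l (by omega)
      · rfl
    rw [this]
  · have := h2' (m - 1 - idx) (by omega)
    rw [List.getElem?_reverse (by omega), List.getElem?_reverse (by omega), hv, hv',
      show m - 1 - (m - 1 - idx) = idx by omega] at this
    exact this

/-- Number of labels. -/
def lblN (n k : ℕ) : ℕ := n * ((n + 1) * ((k + 1) ^ n * (k + 1) ^ n))

/-- The level up to which connectedness must be tested. -/
def lvlB (n k : ℕ) : ℕ :=
  (2 ^ (2 * lblN n k + 1)) ^ (2 * lblN n k + 1) * (2 ^ n) ^ lblN n k

theorem Bounded.conn [Fintype S] [Fintype X] (hA : A.Bounded) (x0 : X)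
    (hB : ∀ m ≤ lvlB (Fintype.card S) (Fintype.card X), A.Conn m) : ∀ m, A.Conn m := by
  classical
  choose enc henc using hA.exists_enc
  refine conn_of_bound x0 (lblN (Fintype.card S) (Fintype.card X)) ?_ enc henc hB
  simp [lblN]

end Bdd

section Grp

variable {S X : Type*} {A : Mealy S X}

theorem Invertible.act_inj (hA : A.Invertible) (s : S) : Function.Injective (A.act s) := by
  intro v u h
  have hl : v.length = u.length := by rw [← A.act_length s v, h, A.act_length]
  induction v generalizing s u with
  | nil => exact (List.length_eq_zero_iff.mp hl.symm).symm
  | cons x v ih =>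
    rcases u with _ | ⟨y, u⟩
    · simp at hl
    · simp only [act, List.cons.injEq] at h
      obtain rfl : x = y := (hA s).1 h.1
      rw [ih _ h.2 (by simpa using hl)]

theorem Invertible.act_surj (hA : A.Invertible) (s : S) : Function.Surjective (A.act s) := by
  intro v
  induction v generalizing s with
  | nil => exact ⟨[], rfl⟩
  | cons y v ih =>
    obtain ⟨x, hx⟩ := (hA s).2 y
    obtain ⟨w, hw⟩ := ih (A.step s x).2
    exact ⟨x :: w, by simp only [act, hw]; rw [← hx]⟩

theorem Invertible.levelTransitive_iff (hA : A.Invertible) :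
    A.LevelTransitive ↔ ∀ m, A.Conn m := by
  constructor
  · rintro h m v u hv hu
    obtain ⟨g, hg, rfl⟩ := h v u (hv.trans hu.symm)
    clear hu hv
    induction hg using Subgroup.closure_induction generalizing v with
    | mem f hf =>
      obtain ⟨s, hs⟩ := hf
      exact Relation.EqvGen.rel _ _ ⟨s, (hs v).symm⟩
    | one => exact Relation.EqvGen.refl _
    | mul f g _ _ h1 h2 => exact Relation.EqvGen.trans _ _ _ (h2 v) (h1 (g v))
    | inv f _ h1 =>
      have := h1 (f⁻¹ v)
      rw [show f (f⁻¹ v) = v by simp] at this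
      exact Relation.EqvGen.symm _ _ this
  · intro h v u hvu
    have := h _ v u rfl hvu.symm
    clear hvu
    induction this with
    | rel a b hab =>
      obtain ⟨s, rfl⟩ := hab
      exact ⟨Equiv.ofBijective (A.act s) ⟨hA.act_inj s, hA.act_surj s⟩,
        Subgroup.subset_closure ⟨s, fun v => rfl⟩, rfl⟩
    | refl a => exact ⟨1, one_mem _, rfl⟩
    | symm a b _ ih =>
      obtain ⟨g, hg, rfl⟩ := ih
      exact ⟨g⁻¹, inv_mem hg, by simp⟩
    | trans a b c _ _ h1 h2 =>
      obtain ⟨g, hg, rfl⟩ := h1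
      obtain ⟨g', hg', rfl⟩ := h2
      exact ⟨g' * g, mul_mem hg' hg, rfl⟩

end Grp

end Mealy

namespace Mealy

section Reach

variable {S X : Type*}

/-- Words reachable from `v0` by at most `N` applications of states. -/
def Rch (A : Mealy S X) (v0 : List X) : ℕ → Set (List X)
  | 0 => {v0}
  | N + 1 => A.Rch v0 N ∪ {u | ∃ v ∈ A.Rch v0 N, ∃ s, A.act s v = u}

variable {A : Mealy S X}

theorem rch_lnk {v0 v : List X} {N : ℕ} (h : v ∈ A.Rch v0 N) : A.Lnk v0 v := by
  induction N generalizing v with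
  | zero => rw [show v = v0 from h]; exact Relation.EqvGen.refl _
  | succ N ih =>
    rcases h with h | ⟨u, hu, s, rfl⟩
    · exact ih h
    · exact Relation.EqvGen.trans _ _ _ (ih hu) (Relation.EqvGen.rel _ _ ⟨s, rfl⟩)

theorem rch_mono (v0 : List X) : Monotone (A.Rch v0) :=
  monotone_nat_of_le_succ fun _ => Set.subset_union_left

theorem ncard_level [Fintype X] (m : ℕ) :
    Set.ncard {v : List X | v.length = m} = Fintype.card X ^ m := by
  rw [← card_vector m, ← Nat.card_eq_fintype_card, ← Nat.card_coe_set_eq]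
  rfl

theorem rch_finite [Finite X] (v0 : List X) (N : ℕ) : (A.Rch v0 N).Finite :=
  (List.finite_length_eq X v0.length).subset fun _ hv => (rch_lnk hv).length.symm

theorem rch_card [Finite X] (v0 : List X) (N : ℕ)
    (h : ∀ M < N, ¬ A.Rch v0 (M + 1) ⊆ A.Rch v0 M) : N + 1 ≤ (A.Rch v0 N).ncard := by
  induction N with
  | zero => simp [Rch]
  | succ N ih =>
    have h1 := ih fun M hM => h M (by omega)
    have h2 : A.Rch v0 N ⊂ A.Rch v0 (N + 1) :=
      ⟨rch_mono v0 (Nat.le_succ N), h N (by omega)⟩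
    have := Set.ncard_lt_ncard h2 (rch_finite v0 _)
    omega

theorem Invertible.rch_iff [Fintype X] (hA : A.Invertible) (v0 : List X) :
    A.Conn v0.length ↔ ∀ v : List X, v.length = v0.length →
      v ∈ A.Rch v0 (Fintype.card X ^ v0.length) := by
  constructor
  · intro h v hv
    have hst : ∃ M < Fintype.card X ^ v0.length, A.Rch v0 (M + 1) ⊆ A.Rch v0 M := by
      by_contra hcon
      push Not at hcon
      have h1 := rch_card v0 _ hcon
      have h2 : (A.Rch v0 (Fintype.card X ^ v0.length)).ncard ≤
          Set.ncard {v : List X | v.length = v0.length} :=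
        Set.ncard_le_ncard (fun _ hv => (rch_lnk hv).length.symm)
          (List.finite_length_eq X v0.length)
      rw [ncard_level] at h2
      omega
    obtain ⟨M, hM, hcl⟩ := hst
    have himg : ∀ s, A.act s '' A.Rch v0 M = A.Rch v0 M := by
      intro s
      apply Set.eq_of_subset_of_ncard_le
      · rintro _ ⟨u, hu, rfl⟩
        exact hcl (Or.inr ⟨u, hu, s, rfl⟩)
      · rw [Set.ncard_image_of_injective _ (hA.act_inj s)]
      · exact rch_finite v0 M
    have hl := h v0 v rfl hv
    have key : ∀ a b, A.Lnk a b → (a ∈ A.Rch v0 M ↔ b ∈ A.Rch v0 M) := by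
      intro a b hab
      induction hab with
      | rel a b hab =>
        obtain ⟨s, rfl⟩ := hab
        conv_rhs => rw [← himg s]
        exact ((hA.act_inj s).mem_set_image).symm
      | refl a => rfl
      | symm a b _ ih => exact ih.symm
      | trans a b c _ _ h1 h2 => exact h1.trans h2
    exact rch_mono v0 hM.le ((key _ _ hl).mp (rch_mono v0 (Nat.zero_le M) rfl))
  · intro h v u hv hu
    exact Relation.EqvGen.trans _ _ _ (Relation.EqvGen.symm _ _ (rch_lnk (h v hv)))
      (rch_lnk (h u hu))

end Reach

end Mealy

namespace MealyComp

/-- Table lookup. -/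
def look (T : List ℕ) (k s x : ℕ) : ℕ × ℕ := (T.getD (s * k + x) 0).unpair

/-- Action of a state on a word of natural numbers, using the table. -/
def actL (d : ℕ × ℕ × List ℕ) (s : ℕ) (w : List ℕ) : List ℕ :=
  (w.foldl (fun p x => ((look d.2.2 d.2.1 p.1 x).2, (look d.2.2 d.2.1 p.1 x).1 :: p.2))
    (s, ([] : List ℕ))).2.reverse

/-- One step of the orbit enumeration. -/
def stepL (d : ℕ × ℕ × List ℕ) (L : List (List ℕ)) : List (List ℕ) :=
  L ++ L.flatMap fun v => (List.range d.1).map fun s => actL d s v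

/-- Orbit enumeration. -/
def reachL (d : ℕ × ℕ × List ℕ) (m : ℕ) : List (List ℕ) :=
  (stepL d)^[d.2.1 ^ m] [(List.range m).map fun _ => 0]

/-- All words of length `m`. -/
def wordsL (k m : ℕ) : List (List ℕ) :=
  (fun L : List (List ℕ) => L.flatMap fun w => (List.range k).map fun x => x :: w)^[m] [[]]

/-- Transitivity test on level `m`. -/
def Test (d : ℕ × ℕ × List ℕ) (m : ℕ) : Prop := ∀ w ∈ wordsL d.2.1 m, ∃ a ∈ reachL d m, a = w

/-- Decoding of the input. -/
def dec (c : ℕ) : ℕ × ℕ × List ℕ :=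
  (c.unpair.1, c.unpair.2.unpair.1,
    (Encodable.decode (α := List ℕ) c.unpair.2.unpair.2).getD [])

/-- The decision predicate. -/
def Good (c : ℕ) : Prop :=
  ∀ m < Mealy.lvlB (dec c).1 (dec c).2.1 + 1, Test (dec c) m

section Prim

open Primrec

theorem pow_prim : Primrec₂ ((· ^ ·) : ℕ → ℕ → ℕ) :=
  Primrec₂.unpaired'.1 Nat.Primrec.pow

theorem dec_prim : Primrec dec := by
  unfold dec
  have u1 : Primrec fun c : ℕ => c.unpair.1 := fst.comp unpair
  have u2 : Primrec fun c : ℕ => c.unpair.2 := snd.comp unpair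
  refine u1.pair ((u1.comp u2).pair ?_)
  exact option_getD.comp (Primrec.decode.comp (u2.comp u2)) (const [])

theorem look_prim {α : Type*} [Primcodable α] {T : α → List ℕ} {k s x : α → ℕ}
    (hT : Primrec T) (hk : Primrec k) (hs : Primrec s) (hx : Primrec x) :
    Primrec fun a => look (T a) (k a) (s a) (x a) := by
  unfold look
  exact unpair.comp ((list_getD 0).comp hT (nat_add.comp (nat_mul.comp hs hk) hx))

theorem actL_prim : Primrec fun q : (ℕ × ℕ × List ℕ) × ℕ × List ℕ => actL q.1 q.2.1 q.2.2 := by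
  have hl : Primrec fun (a : ((ℕ × ℕ × List ℕ) × ℕ × List ℕ) × ((ℕ × List ℕ) × ℕ)) =>
      look a.1.1.2.2 a.1.1.2.1 a.2.1.1 a.2.2 :=
    look_prim (snd.comp (snd.comp (fst.comp fst))) (fst.comp (snd.comp (fst.comp fst)))
      (fst.comp (fst.comp snd)) (snd.comp snd)
  have hs : Primrec₂ fun (a : (ℕ × ℕ × List ℕ) × ℕ × List ℕ) (b : (ℕ × List ℕ) × ℕ) =>
      ((look a.1.2.2 a.1.2.1 b.1.1 b.2).2, (look a.1.2.2 a.1.2.1 b.1.1 b.2).1 :: b.1.2) :=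
    (snd.comp hl).pair (list_cons.comp (fst.comp hl) (snd.comp (fst.comp snd)))
  have hi : Primrec fun a : (ℕ × ℕ × List ℕ) × ℕ × List ℕ => (a.2.1, ([] : List ℕ)) :=
    (fst.comp snd).pair (const [])
  have hw : Primrec fun a : (ℕ × ℕ × List ℕ) × ℕ × List ℕ => a.2.2 := snd.comp snd
  exact list_reverse.comp (snd.comp (list_foldl hw hi hs))

theorem actL_prim3 : Primrec fun q : (((ℕ × ℕ × List ℕ) × List (List ℕ)) × List ℕ) × ℕ =>
    actL q.1.1.1 q.2 q.1.2 := by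
  have h0 : Primrec fun q : (((ℕ × ℕ × List ℕ) × List (List ℕ)) × List ℕ) × ℕ =>
      ((q.1.1.1, q.2, q.1.2) : (ℕ × ℕ × List ℕ) × ℕ × List ℕ) :=
    (fst.comp (fst.comp fst)).pair (snd.pair (snd.comp fst))
  exact (actL_prim.comp h0).of_eq fun _ => rfl

theorem mapL_prim : Primrec₂ fun (q : (ℕ × ℕ × List ℕ) × List (List ℕ)) (v : List ℕ) =>
    (List.range q.1.1).map fun s => actL q.1 s v := by
  have h1 : Primrec₂ fun (q : ((ℕ × ℕ × List ℕ) × List (List ℕ)) × List ℕ) (s : ℕ) =>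
    actL q.1.1 s q.2 := actL_prim3
  have h2 : Primrec fun (q : ((ℕ × ℕ × List ℕ) × List (List ℕ)) × List ℕ) =>
    List.range q.1.1.1 := list_range.comp (fst.comp (fst.comp fst))
  exact list_map h2 h1

theorem stepL_prim : Primrec₂ stepL := by
  have h3 : Primrec fun q : (ℕ × ℕ × List ℕ) × List (List ℕ) =>
      q.2.flatMap fun v => (List.range q.1.1).map fun s => actL q.1 s v :=
    list_flatMap snd mapL_prim
  have h4 : Primrec fun q : (ℕ × ℕ × List ℕ) × List (List ℕ) => stepL q.1 q.2 :=
    (list_append.comp snd h3).of_eq fun _ => rfl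
  exact h4

theorem reachL_prim : Primrec₂ reachL := by
  unfold reachL
  refine nat_iterate (pow_prim.comp (fst.comp (snd.comp fst)) snd) ?_ ?_
  · exact list_cons.comp (list_map (list_range.comp snd) (const 0).to₂) (const [])
  · exact stepL_prim.comp (fst.comp fst) snd

theorem wordsL_prim : Primrec₂ wordsL := by
  unfold wordsL
  refine nat_iterate snd (const [[]]) ?_
  refine list_flatMap snd ?_
  refine list_map (list_range.comp (fst.comp (fst.comp fst))) ?_
  exact list_cons.comp snd (snd.comp fst)

theorem test_prim : PrimrecRel Test := by
  unfold Test
  have h1 : PrimrecRel fun (L : List (List ℕ)) (w : List ℕ) => ∃ a ∈ L, a = w :=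
    PrimrecRel.exists_mem_list Primrec.eq
  have h2 : PrimrecRel fun (w : List ℕ) (L : List (List ℕ)) => ∃ a ∈ L, a = w :=
    h1.comp snd fst
  have h3 : PrimrecRel fun (W L : List (List ℕ)) => ∀ w ∈ W, ∃ a ∈ L, a = w :=
    PrimrecRel.forall_mem_list h2
  exact h3.comp (wordsL_prim.comp (fst.comp (snd.comp fst)) snd) reachL_prim

theorem lblN_prim : Primrec₂ Mealy.lblN := by
  unfold Mealy.lblN
  have hp : Primrec fun a : ℕ × ℕ => (a.2 + 1) ^ a.1 := pow_prim.comp (succ.comp snd) fst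
  exact nat_mul.comp fst (nat_mul.comp (succ.comp fst) (nat_mul.comp hp hp))

theorem lvlB_prim : Primrec₂ Mealy.lvlB := by
  unfold Mealy.lvlB
  have hp : Primrec fun a : ℕ × ℕ => 2 * Mealy.lblN a.1 a.2 + 1 :=
    succ.comp (nat_mul.comp (const 2) lblN_prim)
  exact nat_mul.comp (pow_prim.comp (pow_prim.comp (const 2) hp) hp)
    (pow_prim.comp (pow_prim.comp (const 2) fst) lblN_prim)

theorem good_prim : PrimrecPred Good := by
  unfold Good
  have h1 : PrimrecRel fun (m : ℕ) (c : ℕ) => Test (dec c) m :=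
    test_prim.comp (dec_prim.comp snd) fst
  have h2 : PrimrecRel fun (N : ℕ) (c : ℕ) => ∀ m < N, Test (dec c) m :=
    PrimrecRel.forall_mem_list h1 |>.comp (list_range.comp fst) snd |>.of_eq (by simp)
  exact h2.comp (succ.comp (lvlB_prim.comp (fst.comp dec_prim)
    (fst.comp (snd.comp dec_prim)))) Primrec.id

end Prim

section Correct

variable {n k : ℕ} (step : Fin n → Fin k → Fin k × Fin n)

/-- The table of an automaton. -/
def tab : List ℕ := (List.finRange n).flatMap fun s =>
  (List.finRange k).map fun x => Nat.pair ((step s x).1 : ℕ) ((step s x).2 : ℕ)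

theorem dec_encode : dec (encodeAut n k step) = (n, k, tab step) := by
  simp only [dec, encodeAut, Nat.unpair_pair, Encodable.encodek]
  rfl

theorem flatMap_getD {α : Type*} (l : List α) (g : α → List ℕ) (k : ℕ)
    (hg : ∀ a, (g a).length = k) (i x : ℕ) (hi : i < l.length) (hx : x < k) :
    (l.flatMap g).getD (i * k + x) 0 = (g l[i]).getD x 0 := by
  induction l generalizing i with
  | nil => simp at hi
  | cons a l ih =>
    rw [List.flatMap_cons]
    rcases i with _ | i
    · rw [List.getD_append _ _ _ _ (by rw [hg]; omega)]
      simp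
    · rw [List.getD_append_right _ _ _ _ (by rw [hg, Nat.succ_mul]; omega), hg,
        show (i + 1) * k + x - k = i * k + x by rw [Nat.succ_mul]; omega]
      simpa using ih i (by simpa using hi)

theorem look_tab (s : Fin n) (x : Fin k) :
    look (tab step) k s x = (((step s x).1 : ℕ), ((step s x).2 : ℕ)) := by
  unfold look tab
  rw [flatMap_getD _ _ k (by simp) _ _ (by simp) x.2]
  simp

theorem actL_tab (s : Fin n) (w : List (Fin k)) :
    actL (n, k, tab step) s (w.map Fin.val) = ((Mealy.mk step).act s w).map Fin.val := by
  unfold actL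
  suffices h : ∀ (o : List ℕ), ((w.map Fin.val).foldl (fun p x => ((look (tab step) k p.1 x).2,
      (look (tab step) k p.1 x).1 :: p.2)) ((s : ℕ), o)).2 =
      (((Mealy.mk step).act s w).map Fin.val).reverse ++ o by
    rw [h []]; simp
  induction w generalizing s with
  | nil => intro o; simp [Mealy.act]
  | cons x w ih =>
    intro o
    simp only [List.map_cons, List.foldl_cons, look_tab, Mealy.act, List.reverse_cons,
      List.append_assoc]
    rw [ih]
    simp

theorem mem_reach (v0 : List (Fin k)) (N : ℕ) (w : List ℕ) :
    w ∈ (stepL (n, k, tab step))^[N] [v0.map Fin.val] ↔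
      ∃ v ∈ (Mealy.mk step).Rch v0 N, v.map Fin.val = w := by
  induction N generalizing w with
  | zero => simp [Mealy.Rch, eq_comm]
  | succ N ih =>
    rw [Function.iterate_succ_apply', stepL, List.mem_append, List.mem_flatMap, ih]
    constructor
    · rintro (⟨v, hv, rfl⟩ | ⟨u, hu, hw⟩)
      · exact ⟨v, Or.inl hv, rfl⟩
      · obtain ⟨v, hv, rfl⟩ := (ih u).mp hu
        simp only [List.mem_map, List.mem_range] at hw
        obtain ⟨s, hs, rfl⟩ := hw
        exact ⟨_, Or.inr ⟨v, hv, ⟨s, hs⟩, rfl⟩, (actL_tab step ⟨s, hs⟩ v).symm⟩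
    · rintro ⟨v, hv | ⟨u, hu, s, rfl⟩, rfl⟩
      · exact Or.inl ⟨v, hv, rfl⟩
      · refine Or.inr ⟨u.map Fin.val, (ih _).mpr ⟨u, hu, rfl⟩, ?_⟩
        simp only [List.mem_map, List.mem_range]
        exact ⟨s, s.2, actL_tab step s u⟩

theorem mem_words (m : ℕ) (w : List ℕ) :
    w ∈ wordsL k m ↔ ∃ v : List (Fin k), v.length = m ∧ v.map Fin.val = w := by
  unfold wordsL
  induction m generalizing w with
  | zero =>
    simp only [Function.iterate_zero, id_eq, List.mem_singleton]
    constructor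
    · rintro rfl; exact ⟨[], rfl, rfl⟩
    · rintro ⟨v, hv, rfl⟩; rw [List.length_eq_zero_iff.mp hv]; rfl
  | succ m ih =>
    rw [Function.iterate_succ_apply', List.mem_flatMap]
    simp only [List.mem_map, List.mem_range]
    constructor
    · rintro ⟨u, hu, x, hx, rfl⟩
      obtain ⟨v, hv, rfl⟩ := (ih u).mp hu
      exact ⟨⟨x, hx⟩ :: v, by simp [hv], rfl⟩
    · rintro ⟨_ | ⟨x, v⟩, hv, rfl⟩
      · simp at hv
      · exact ⟨v.map Fin.val, (ih _).mpr ⟨v, by simpa using hv, rfl⟩, x, x.2, rfl⟩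

theorem test_iff (hk : 0 < k) (hA : (Mealy.mk step).Invertible) (m : ℕ) :
    Test (n, k, tab step) m ↔ (Mealy.mk step).Conn m := by
  set v0 : List (Fin k) := List.replicate m ⟨0, hk⟩ with hv0
  have hl : v0.length = m := by simp [hv0]
  have hz : ((List.range m).map fun _ => 0) = v0.map Fin.val := by
    simp [hv0]
  have h := hA.rch_iff v0
  rw [hl, Fintype.card_fin] at h
  rw [h]
  unfold Test reachL
  simp only [hz, exists_eq_right, mem_reach, mem_words]
  constructor
  · intro H v hv
    obtain ⟨u, hu, he⟩ := H _ ⟨v, hv, rfl⟩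
    rwa [← List.map_injective_iff.mpr Fin.val_injective he]
  · rintro H _ ⟨v, hv, rfl⟩
    exact ⟨v, H v hv, rfl⟩

end Correct

end MealyComp

/-- One can decide, given a bounded invertible Mealy automaton `A`,
whether the group `G_A` is level-transitive. -/
theorem level_transitivity_decidable :
    ∃ F : ℕ → Bool, Computable F ∧
      ∀ (n k : ℕ) (step : Fin n → Fin k → Fin k × Fin n),
        2 ≤ k → (Mealy.mk step).Invertible → (Mealy.mk step).Bounded →
          (F (encodeAut n k step) = true ↔ (Mealy.mk step).LevelTransitive) := by
  classical
  refine ⟨fun c => decide (MealyComp.Good c), MealyComp.good_prim.decide.to_comp, ?_⟩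
  intro n k step hk hI hB
  rw [decide_eq_true_iff, hI.levelTransitive_iff, MealyComp.Good, MealyComp.dec_encode]
  simp only [MealyComp.test_iff step (by omega) hI]
  constructor
  · intro h
    refine hB.conn (⟨0, by omega⟩ : Fin k) ?_
    intro m hm
    rw [Fintype.card_fin, Fintype.card_fin] at hm
    exact h m (by omega)
  · intro h m _
    exact h m
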